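/- Let X be a topological space, Y ⊆ X, and n ∈ ℕ. Then Y is an n-difference of open sets if and only if Alternator does NOT win the n+1 round alternating game on Y, i.e. ¬ AltWins univ (altList Y (n+1)). -/

import Mathlib

/-- `AltWins U Xs` : Alternator wins the game `H_U(X_1,…,X_n)`. -/
def AltWins {X : Type*} [TopologicalSpace X] : Set X → List (Set X) → Prop
  | _, [] => True
  | U, A :: rest => ∃ x, x ∈ U ∩ A ∧
      ∀ V : Set X, IsOpen V → x ∈ V → V ⊆ U → AltWins V rest

/-- The list of length `m` alternating `Y, Yᶜ, Y, …` starting with `Y`. -/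
def altList {X : Type*} (Y : Set X) (m : ℕ) : List (Set X) :=
  (List.range m).map fun i => if i % 2 = 0 then Y else Yᶜ

/-- `Y` is an `n`-difference of open sets. -/
def IsNDiff {X : Type*} [TopologicalSpace X] (n : ℕ) (Y : Set X) : Prop :=
  ∃ A : ℕ → Set X, (∀ i, IsOpen (A i)) ∧ (∀ i j, i ≤ j → A i ⊆ A j) ∧
    ∀ x, x ∈ Y ↔ ∃ i, i < n ∧ x ∈ A i ∧ (∀ j, j < i → x ∉ A j) ∧ (n - i) % 2 = 1

/-- The set Alternator must hit when `i + 1` rounds remain. -/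
def altSet {X : Type*} (Y : Set X) (n i : ℕ) : Set X := {x | x ∈ Y ↔ (n + i) % 2 = 0}

/-- The alternating list, built from its end. -/
def altTail {X : Type*} (Y : Set X) (n : ℕ) : ℕ → List (Set X)
  | 0 => []
  | i + 1 => altSet Y n i :: altTail Y n i

theorem altTail_eq {X : Type*} (Y : Set X) (n m : ℕ) : ∀ p, (n + m + p) % 2 = 1 →
    (List.range m).map (fun i => if (i + p) % 2 = 0 then Y else Yᶜ) = altTail Y n m := by
  induction m with
  | zero => intro p _; rfl
  | succ m ih =>
    intro p hp
    rw [List.range_succ_eq_map, List.map_cons, List.map_map, altTail, ← ih (p + 1) (by omega)]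
    congr 1
    · ext x
      by_cases h : p % 2 = 0
      · have : (n + m) % 2 = 0 := by omega
        simp [altSet, h, this]
      · have : ¬ (n + m) % 2 = 0 := by omega
        simp only [altSet, Nat.zero_add, h, this, if_false]
        simp
    · apply List.map_congr_left
      intro i _
      simp only [Function.comp, Nat.succ_eq_add_one]
      rw [show i + 1 + p = i + (p + 1) by omega]

theorem nDiff_iff_not_altWins {X : Type*} [TopologicalSpace X]
    (Y : Set X) (n : ℕ) :
    IsNDiff n Y ↔ ¬ AltWins (Set.univ : Set X) (altList Y (n + 1)) := by
  have e : altList Y (n + 1) = altTail Y n (n + 1) := altTail_eq Y n (n + 1) 0 (by omega)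
  rw [e]
  constructor
  · rintro ⟨A, hA, hmono, hY⟩
    have key : ∀ i, i ≤ n → ∀ V : Set X, IsOpen V → (i < n → V ⊆ A i) →
        ¬ AltWins V (altTail Y n (i + 1)) := by
      intro i
      induction i using Nat.strong_induction_on with
      | _ i ih =>
      intro hi V hV hVA hw
      obtain ⟨x, ⟨hxV, hxC⟩, hx⟩ := hw
      have hj : ∃ j, j < i ∧ x ∈ A j := by
        by_contra hcon
        push Not at hcon
        have hxC' : x ∈ Y ↔ (n + i) % 2 = 0 := hxC
        by_cases hin : i < n
        · have hxi := hVA hin hxV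
          by_cases hp : (n + i) % 2 = 0
          · obtain ⟨k, hk, hxk, hlt, hpk⟩ := (hY x).1 (hxC'.2 hp)
            rcases lt_trichotomy k i with h | h | h
            · exact hcon k h hxk
            · subst h; omega
            · exact hlt i h hxi
          · exact hp (hxC'.1 ((hY x).2 ⟨i, hin, hxi, hcon, by omega⟩))
        · obtain ⟨k, hk, hxk, -⟩ := (hY x).1 (hxC'.2 (by omega))
          exact hcon k (by omega) hxk
      obtain ⟨j, hji, hxj⟩ := hj
      obtain ⟨i, rfl⟩ : ∃ i', i = i' + 1 := ⟨i - 1, by omega⟩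
      have hxi : x ∈ A i := hmono j i (by omega) hxj
      exact ih i (by omega) (by omega) (V ∩ A i) (hV.inter (hA i))
        (fun _ => Set.inter_subset_right)
        (hx _ (hV.inter (hA i)) ⟨hxV, hxi⟩ Set.inter_subset_left)
    exact key n le_rfl _ isOpen_univ (fun h => absurd h (lt_irrefl _))
  · intro hn
    let A : ℕ → Set X := fun i => ⋃₀ {V | IsOpen V ∧ ¬ AltWins V (altTail Y n (i + 1))}
    have step : ∀ i x (V : Set X), ¬ AltWins V (altTail Y n (i + 1)) → x ∈ V →
        x ∈ altSet Y n i → ∃ j, i = j + 1 ∧ x ∈ A j := by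
      intro i x V hV hxV hxC
      have : ∃ W : Set X, IsOpen W ∧ x ∈ W ∧ ¬ AltWins W (altTail Y n i) := by
        by_contra hcon
        push Not at hcon
        exact hV ⟨x, ⟨hxV, hxC⟩, fun W hW hxW _ => hcon W hW hxW⟩
      obtain ⟨W, hW, hxW, hl⟩ := this
      cases i with
      | zero => exact absurd trivial (by simpa [altTail, AltWins] using hl)
      | succ j => exact ⟨j, rfl, W, ⟨hW, hl⟩, hxW⟩
    have hmono : Monotone A := by
      apply monotone_nat_of_le_succ
      rintro i x ⟨V, ⟨hV, hl⟩, hxV⟩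
      refine ⟨V, ⟨hV, ?_⟩, hxV⟩
      rintro ⟨y, ⟨hyV, -⟩, hy⟩
      exact hl (hy V hV hyV subset_rfl)
    have first : ∀ i x, x ∈ A i → (∀ j, j < i → x ∉ A j) → ¬ (x ∈ Y ↔ (n + i) % 2 = 0) := by
      rintro i x ⟨V, ⟨hV, hl⟩, hxV⟩ hlt hC
      obtain ⟨j, hj, hxj⟩ := step i x V hl hxV hC
      exact hlt j (by omega) hxj
    refine ⟨A, fun i => isOpen_sUnion fun V hV => hV.1, fun i j h => hmono h, fun x => ?_⟩
    constructor
    · intro hxY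
      obtain ⟨j, hj, hxj⟩ := step n x _ hn trivial
        (show x ∈ Y ↔ (n + n) % 2 = 0 from ⟨fun _ => by omega, fun _ => hxY⟩)
      classical
      have hex : ∃ i, x ∈ A i := ⟨j, hxj⟩
      have hle : Nat.find hex ≤ j := Nat.find_min' hex hxj
      have hf := first _ x (Nat.find_spec hex) (fun k hk => Nat.find_min hex hk)
      refine ⟨Nat.find hex, by omega, Nat.find_spec hex, fun k hk => Nat.find_min hex hk, ?_⟩
      have : ¬ (n + Nat.find hex) % 2 = 0 := fun h => hf ⟨fun _ => h, fun _ => hxY⟩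
      omega
    · rintro ⟨i, hi, hxi, hlt, hp⟩
      by_contra hxY
      exact first i x hxi hlt ⟨fun h => absurd h hxY, fun h => by omega⟩
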